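/- arXiv:1210.1059 — 2 statements merged into one kernel-verified Lean document; each statement's English description precedes it below -/
import Mathlib

section
/- Suppose k ≥ 1, n ≥ k, n + k is even, and ℓ ≥ 0 is an integer. Then P_{n+1}(k−1) − Pₙ(k−2) = P(Sₙ = k) (with Pₙ(−1) interpreted as 0) and P_{n+1}(k−1) − P_{n+1+2ℓ}(k−1) = Σ_{i=1}^{ℓ} (k/(n+2i))·P(S_{n+2i} = k). -/
/-!
Conditioning on one sign writes the law of `S (n + 1)` as the average of the laws of `S n + 1` and
`S n - 1` (`pr_succ`). If `n + m` is odd then, `S n` having the parity of `n`, each of the two events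
`|S n ± 1| ≤ m` is `|S n| ≤ m - 1` together with one of the points `S n = ∓(m + 1)`, and also
`|S n| ≤ m + 1` without the opposite point. These points have equal mass by symmetry. So

* `P (n + 1) (k - 1) = P n (k - 2) + P(S n = k)` when `n + k` is even (`P_succ_of_even`); this is
  the first identity;
* `P (n + 1) (k - 2) = P n (k - 1) - P(S n = k - 1)` when `n + k` is odd (`P_succ_of_odd`).

Applying both, `P (n + 1) (k - 1) - P (n + 3) (k - 1) = P(S (n + 1) = k - 1) - P(S (n + 2) = k)`,
and `(N + j) P(S N = j) = N P(S (N - 1) = j - 1)` (`prEq_ratio`) turns the right side into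
`k / (n + 2) * P(S (n + 2) = k)`. Telescoping over steps of two gives the second identity.
-/

/-- Probability of an event under the uniform distribution on sign vectors
`{-1,1}^n` (encoded as `Fin n → Bool`), which is the joint law of `n`
independent Rademacher random variables. -/
noncomputable def pr (n : ℕ) (E : (Fin n → Bool) → Prop) : ℝ :=
  letI := Classical.decPred E
  ((Finset.univ.filter E).card : ℝ) / 2 ^ n

/-- `S n ε = ε₁ + ⋯ + εₙ`, the sum of `n` Rademacher variables. -/
def S (n : ℕ) (ε : Fin n → Bool) : ℤ := ∑ i, if ε i then 1 else -1

/-- `P n k = P(|Sₙ| ≤ k)` (with an integer threshold, so `P n (-1) = 0`). -/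
noncomputable def P (n : ℕ) (k : ℤ) : ℝ := pr n fun ε => |S n ε| ≤ k

/-- `prEq n j = P(Sₙ = j)`. -/
noncomputable def prEq (n : ℕ) (j : ℤ) : ℝ := pr n fun ε => S n ε = j

/-- `Pxi ξ n = P(|Sₙ| ≤ ξ·√n)`. -/
noncomputable def Pxi (ξ : ℝ) (n : ℕ) : ℝ :=
  pr n fun ε => (|S n ε| : ℝ) ≤ ξ * Real.sqrt n

/-- `nseq ξ k = nₖ = 2·⌈(k²/ξ² + k)/2⌉ − k − 1`. -/
noncomputable def nseq (ξ : ℝ) (k : ℕ) : ℤ :=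
  2 * ⌈((k : ℝ) ^ 2 / ξ ^ 2 + (k : ℝ)) / 2⌉ - k - 1

theorem S_cons (n : ℕ) (b : Bool) (ε : Fin n → Bool) :
    S (n + 1) (Fin.cons b ε) = (if b then 1 else -1) + S n ε := by
  simp [S, Fin.sum_univ_succ]

theorem S_parity (n : ℕ) (ε : Fin n → Bool) : ∃ q : ℤ, S n ε = n + 2 * q := by
  induction n with
  | zero => exact ⟨0, by simp [S]⟩
  | succ n ih =>
    obtain ⟨q, hq⟩ := ih (Fin.tail ε)
    rw [← Fin.cons_self_tail ε, S_cons, hq]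
    cases ε 0
    · exact ⟨q - 1, by simp; ring⟩
    · exact ⟨q, by simp; ring⟩

theorem pr_congr (n : ℕ) {E F : (Fin n → Bool) → Prop} (h : ∀ ε, E ε ↔ F ε) :
    pr n E = pr n F := by
  rw [show E = F from funext fun ε => propext (h ε)]

theorem pr_eq_sum (n : ℕ) (E : (Fin n → Bool) → Prop) [DecidablePred E] :
    pr n E = (∑ ε, if E ε then (1 : ℝ) else 0) / 2 ^ n := by
  unfold pr
  simp only [Finset.sum_boole]
  congr!

theorem pr_or (n : ℕ) {E F G : (Fin n → Bool) → Prop} (h : ∀ ε, E ε ↔ F ε ∨ G ε)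
    (hd : ∀ ε, F ε → ¬ G ε) : pr n E = pr n F + pr n G := by
  classical
  rw [pr_eq_sum, pr_eq_sum, pr_eq_sum, ← add_div, ← Finset.sum_add_distrib]
  congr 1
  refine Finset.sum_congr rfl fun ε _ => ?_
  have := h ε
  have := hd ε
  by_cases hF : F ε <;> by_cases hG : G ε <;> simp_all

/-- Conditioning on the first sign. -/
theorem pr_succ (n : ℕ) (A : ℤ → Prop) :
    pr (n + 1) (fun ε => A (S (n + 1) ε)) =
      (pr n (fun ε => A (S n ε + 1)) + pr n (fun ε => A (S n ε - 1))) / 2 := by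
  classical
  rw [pr_eq_sum, pr_eq_sum, pr_eq_sum, ← (Fin.consEquiv fun _ => Bool).sum_comp,
    Fintype.sum_prod_type]
  simp only [Fin.consEquiv, Equiv.coe_fn_mk, S_cons, Fintype.sum_bool, if_true, add_comm (1 : ℤ),
    Bool.false_eq_true, if_false, neg_add_eq_sub]
  rw [pow_succ]
  ring

theorem prEq_succ (n : ℕ) (j : ℤ) :
    prEq (n + 1) j = (prEq n (j - 1) + prEq n (j + 1)) / 2 := by
  unfold prEq
  rw [pr_succ n (fun s => s = j)]
  rw [pr_congr n (E := fun ε => S n ε + 1 = j) (F := fun ε => S n ε = j - 1) (by grind),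
    pr_congr n (E := fun ε => S n ε - 1 = j) (F := fun ε => S n ε = j + 1) (by grind)]

theorem prEq_zero (j : ℤ) : prEq 0 j = if j = 0 then 1 else 0 := by
  classical
  unfold prEq
  rw [pr_eq_sum]
  simp [S, @eq_comm ℤ 0 j]

theorem prEq_neg (n : ℕ) (j : ℤ) : prEq n (-j) = prEq n j := by
  induction n generalizing j with
  | zero => simp [prEq_zero]
  | succ n ih =>
    rw [prEq_succ, prEq_succ, ← ih (j - 1), ← ih (j + 1), add_comm]
    congr 3 <;> ring

/-- The identity `b * C(N + 1, b) = (N + 1) * C(N, b - 1)` for binomial coefficients, with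
`j = 2 * b - (N + 1)`, in terms of the walk. It holds for every integer `j`, the degenerate cases
included, and follows by induction from the Pascal rule `prEq_succ`. -/
theorem prEq_ratio (N : ℕ) (j : ℤ) :
    ((N : ℝ) + 1 + j) * prEq (N + 1) j = (N + 1) * prEq N (j - 1) := by
  induction N generalizing j with
  | zero =>
    rw [prEq_succ]
    simp only [prEq_zero]
    by_cases h1 : j = 1
    · subst h1; norm_num
    by_cases h2 : j = -1
    · subst h2; norm_num
    · rw [if_neg (by omega), if_neg (by omega)]; simp
  | succ N ih =>
    have h1 := ih (j - 1)
    have h2 := ih (j + 1)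
    have h3 := prEq_succ N (j - 1)
    rw [show j - 1 + 1 = j by ring] at h3
    rw [show j + 1 - 1 = j by ring] at h2
    rw [prEq_succ (N + 1) j]
    push_cast at h1 h2 ⊢
    linear_combination (1 / 2) * h1 + (1 / 2) * h2 - (N + 1 : ℝ) * h3

theorem P_succ_of_even (n k : ℕ) (hk : 1 ≤ k) (h : Even (n + k)) :
    P (n + 1) ((k : ℤ) - 1) = P n ((k : ℤ) - 2) + prEq n k := by
  obtain ⟨r, hr⟩ := h
  have e1 : pr n (fun ε => |S n ε + 1| ≤ (k : ℤ) - 1) = P n ((k : ℤ) - 2) + prEq n (-k) := by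
    refine pr_or n (fun ε => ?_) (fun ε => ?_) <;>
    · obtain ⟨q, hq⟩ := S_parity n ε
      simp only [abs_le]
      omega
  have e2 : pr n (fun ε => |S n ε - 1| ≤ (k : ℤ) - 1) = P n ((k : ℤ) - 2) + prEq n k := by
    refine pr_or n (fun ε => ?_) (fun ε => ?_) <;>
    · obtain ⟨q, hq⟩ := S_parity n ε
      simp only [abs_le]
      omega
  rw [prEq_neg] at e1
  rw [P, pr_succ n (fun s => |s| ≤ (k : ℤ) - 1), e1, e2]
  ring

theorem P_succ_of_odd (n k : ℕ) (hk : 1 ≤ k) (h : Odd (n + k)) :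
    P (n + 1) ((k : ℤ) - 2) = P n ((k : ℤ) - 1) - prEq n ((k : ℤ) - 1) := by
  obtain ⟨r, hr⟩ := h
  have e1 : P n ((k : ℤ) - 1) =
      pr n (fun ε => |S n ε + 1| ≤ (k : ℤ) - 2) + prEq n ((k : ℤ) - 1) := by
    refine pr_or n (fun ε => ?_) (fun ε => ?_) <;>
    · obtain ⟨q, hq⟩ := S_parity n ε
      simp only [abs_le]
      omega
  have e2 : P n ((k : ℤ) - 1) =
      pr n (fun ε => |S n ε - 1| ≤ (k : ℤ) - 2) + prEq n (-((k : ℤ) - 1)) := by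
    refine pr_or n (fun ε => ?_) (fun ε => ?_) <;>
    · obtain ⟨q, hq⟩ := S_parity n ε
      simp only [abs_le]
      omega
  rw [prEq_neg] at e2
  rw [P, pr_succ n (fun s => |s| ≤ (k : ℤ) - 2)]
  linear_combination -(1 / 2) * e1 - (1 / 2) * e2

theorem P_two_step (n k : ℕ) (hk : 1 ≤ k) (h : Even (n + k)) :
    P (n + 1) ((k : ℤ) - 1) - P (n + 3) ((k : ℤ) - 1) =
      (k : ℝ) / ((n : ℝ) + 2) * prEq (n + 2) k := by
  have h1 := P_succ_of_even (n + 2) k hk (by grind)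
  have h2 := P_succ_of_odd (n + 1) k hk (by grind)
  have h3 := prEq_ratio (n + 1) k
  have hn : (n : ℝ) + 2 ≠ 0 := by positivity
  push_cast at h3
  rw [show n + 3 = n + 2 + 1 by rfl, h1, h2]
  simp only [add_assoc, Nat.reduceAdd] at h3 ⊢
  field_simp
  linear_combination -h3

/-- if `k ≥ 1`, `n ≥ k`, `n + k` even, `ℓ ≥ 0`, then
`P_{n+1}(k−1) − Pₙ(k−2) = P(Sₙ = k)` (with `Pₙ(−1) = 0`) and
`P_{n+1}(k−1) − P_{n+1+2ℓ}(k−1) = Σ_{i=1}^ℓ (k/(n+2i))·P(S_{n+2i} = k)`. -/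
theorem stmt_14 (n k ℓ : ℕ) (hk : 1 ≤ k) (hnk : k ≤ n) (h : Even (n + k)) :
    P (n + 1) ((k : ℤ) - 1) - P n ((k : ℤ) - 2) = prEq n (k : ℤ) ∧
    P (n + 1) ((k : ℤ) - 1) - P (n + 1 + 2 * ℓ) ((k : ℤ) - 1)
      = ∑ i ∈ Finset.Icc 1 ℓ,
          ((k : ℝ) / ((n : ℝ) + 2 * (i : ℝ))) * prEq (n + 2 * i) (k : ℤ) := by
  refine ⟨by rw [P_succ_of_even n k hk h]; ring, ?_⟩
  induction ℓ with
  | zero => simp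
  | succ ℓ ih =>
    have hs := P_two_step (n + 2 * ℓ) k hk (by grind)
    rw [Finset.sum_Icc_succ_top (by omega), ← ih,
      show n + 2 * (ℓ + 1) = n + 2 * ℓ + 2 by ring,
      show n + 1 + 2 * (ℓ + 1) = n + 2 * ℓ + 3 by ring,
      show n + 1 + 2 * ℓ = n + 2 * ℓ + 1 by ring]
    push_cast at hs ⊢
    rw [mul_add, mul_one, ← add_assoc, ← hs]
    ring
end

section
/- Suppose k ≥ 1, n + k is even, n + 2 ≥ k², and ℓ ≥ 0 is an integer such that n + 1 + 2ℓ < ((k+1)²/k²)·(n+2). Then Σ_{i=1}^{ℓ} k/(n+2i) ≤ 1. -/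
/-- The quadratic inequality `(k² + 1) ℓ² ≤ (a + ℓ)²` in the variables `ℓ = k + 1 + r` and
`a + 1 = k² + m`. The cases `r = 0, 1` use that `m` is an integer (even, when `k = r = 1`); for
`r ≥ 2` the bound `2 k² r + 1 ≤ (2 k + 1) m` suffices. -/
lemma key_ineq (k r m : ℕ) (hk : 1 ≤ k) (hm : Even m) (h : 2 * k ^ 2 * r < (2 * k + 1) * m) :
    (k ^ 2 + 1) * (k + 1 + r) ^ 2 ≤ (k ^ 2 + k + m + r) ^ 2 := by
  have hm2 : 2 ≤ m := by
    obtain ⟨p, rfl⟩ := hm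
    rcases Nat.eq_zero_or_pos p with rfl | hp
    · simp at h
    · omega
  rcases Nat.lt_or_ge r 2 with hr | hr
  · interval_cases r
    · calc (k ^ 2 + 1) * (k + 1 + 0) ^ 2 ≤ (k ^ 2 + k + 2 + 0) ^ 2 := by nlinarith
        _ ≤ _ := by gcongr
    · have hmk : k ≤ m := by
        by_contra! hlt
        obtain ⟨d, rfl⟩ := Nat.exists_eq_add_of_lt hlt
        nlinarith
      rcases Nat.lt_or_ge k 2 with h1 | h1
      · obtain rfl : k = 1 := by omega
        nlinarith
      · calc (k ^ 2 + 1) * (k + 1 + 1) ^ 2 ≤ (k ^ 2 + k + k + 1) ^ 2 := by nlinarith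
          _ ≤ _ := by gcongr
  · have hX : (2 * k + 1) * (k ^ 2 + k + r) + 2 * k ^ 2 * r + 1
        ≤ (2 * k + 1) * (k ^ 2 + k + m + r) := by nlinarith
    have hX2 := Nat.pow_le_pow_left hX 2
    have hpoly : (2 * k + 1) ^ 2 * ((k ^ 2 + 1) * (k + 1 + r) ^ 2)
        ≤ ((2 * k + 1) * (k ^ 2 + k + r) + 2 * k ^ 2 * r + 1) ^ 2 := by
      obtain ⟨b, rfl⟩ := Nat.exists_eq_add_of_le hr
      rcases Nat.lt_or_ge k 2 with h1 | h1
      · obtain rfl : k = 1 := by omega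
        nlinarith
      · -- after the shifts `k = 2 + c`, `r = 2 + b`, the difference has nonnegative coefficients
        obtain ⟨c, rfl⟩ := Nat.exists_eq_add_of_le h1
        zify
        rw [← sub_nonneg]
        ring_nf
        positivity
    rw [mul_pow] at hX2
    exact Nat.le_of_mul_le_mul_left (hpoly.trans hX2) (by positivity)

lemma sum_le_log (n ℓ : ℕ) :
    ∑ i ∈ Finset.Icc 1 ℓ, 1 / ((n : ℝ) + 2 * (i : ℝ))
      ≤ Real.log (((n : ℝ) + 1 + 2 * ℓ) / (n + 1)) / 2 := by
  induction ℓ with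
  | zero =>
    have : (n : ℝ) + 1 ≠ 0 := by positivity
    simp [this]
  | succ l ih =>
    rw [Finset.sum_Icc_succ_top (by omega)]
    have hb : (0 : ℝ) < (n : ℝ) + 1 + 2 * l := by positivity
    have hlog := Real.le_log_one_add_of_nonneg (x := 2 / ((n : ℝ) + 1 + 2 * l)) (by positivity)
    have e1 : 2 * (2 / ((n : ℝ) + 1 + 2 * l)) / (2 / ((n : ℝ) + 1 + 2 * l) + 2)
        = 2 * (1 / ((n : ℝ) + 2 * ((l + 1 : ℕ) : ℝ))) := by
      have : (n : ℝ) + 2 * (l + 1) ≠ 0 := by positivity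
      push_cast
      field_simp
      ring
    have e2 : ((n : ℝ) + 1 + 2 * ((l + 1 : ℕ) : ℝ)) / (n + 1)
        = (((n : ℝ) + 1 + 2 * l) / (n + 1)) * (1 + 2 / ((n : ℝ) + 1 + 2 * l)) := by
      push_cast
      field_simp
      ring
    rw [e2, Real.log_mul (by positivity) (by positivity)]
    rw [e1] at hlog
    linarith

/-- Follows from `s ≤ sinh s` at `s = log y / 2`, `y = (a + 2 l) / a`, since
`4 sinh² s = y + 1 / y - 2`. -/
lemma mul_log_le_two (a l k : ℝ) (ha : 0 < a) (hl : 0 ≤ l)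
    (h : (k ^ 2 + 1) * l ^ 2 ≤ (a + l) ^ 2) :
    k * Real.log ((a + 2 * l) / a) ≤ 2 := by
  set y := (a + 2 * l) / a with hy
  have hy1 : 1 ≤ y := by rw [hy, le_div_iff₀ ha]; linarith
  set s := Real.log y / 2 with hs
  have hs0 : 0 ≤ s := by have := Real.log_nonneg hy1; positivity
  have hsinh : s ≤ Real.sinh s := Real.self_le_sinh_iff.2 hs0
  have hexp : Real.exp s * Real.exp s = y := by
    rw [← Real.exp_add, hs, add_halves, Real.exp_log (by linarith)]
  have hsq : Real.sinh s ^ 2 = l ^ 2 / (a * (a + 2 * l)) := by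
    have h1 : Real.sinh s ^ 2 = (y + 1 / y - 2) / 4 := by
      rw [Real.sinh_eq, Real.exp_neg, ← hexp]
      have := Real.exp_pos s
      field_simp
      ring
    have : 0 < a + 2 * l := by positivity
    rw [h1, hy]
    field_simp
    ring
  have hks : (k * s) ^ 2 ≤ 1 := by
    calc (k * s) ^ 2 ≤ k ^ 2 * Real.sinh s ^ 2 := by rw [mul_pow]; gcongr
      _ ≤ 1 := by
        rw [hsq, ← mul_div_assoc, div_le_one (by positivity)]
        nlinarith
  have := (abs_le.1 ((sq_le_one_iff_abs_le_one _).1 hks)).2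
  have e : k * Real.log y = 2 * (k * s) := by rw [hs]; ring
  linarith

/-- if `k ≥ 1`, `n + k` even, `n + 2 ≥ k²` and `ℓ ≥ 0` with
`n + 1 + 2ℓ < ((k+1)²/k²)(n+2)`, then `Σ_{i=1}^ℓ k/(n+2i) ≤ 1`. -/
theorem stmt_19 (n k ℓ : ℕ) (hk : 1 ≤ k) (h : Even (n + k)) (h2 : k ^ 2 ≤ n + 2)
    (hℓ : ((n : ℝ) + 1 + 2 * (ℓ : ℝ)) < (((k : ℝ) + 1) ^ 2 / (k : ℝ) ^ 2) * ((n : ℝ) + 2)) :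
    ∑ i ∈ Finset.Icc 1 ℓ, (k : ℝ) / ((n : ℝ) + 2 * (i : ℝ)) ≤ 1 := by
  have hk0 : (0 : ℝ) < k := by exact_mod_cast hk
  rcases Nat.lt_or_ge k ℓ with hlt | hle
  · obtain ⟨m, hm⟩ := Nat.exists_eq_add_of_le h2
    obtain ⟨r, rfl⟩ := Nat.exists_eq_add_of_le (Nat.succ_le_of_lt hlt)
    have hmeven : Even m := by
      have h3 : Even (k ^ 2 + m) ↔ Even n := by rw [← hm]; simp [Nat.even_add]
      have h4 : Even (k ^ 2) ↔ Even k := by simp [Nat.even_pow]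
      rw [Nat.even_add] at h h3
      tauto
    have hnat : 2 * k ^ 2 * r < (2 * k + 1) * m := by
      rw [div_mul_eq_mul_div, lt_div_iff₀ (by positivity)] at hℓ
      have hmR : (n : ℝ) = (k : ℝ) ^ 2 + m - 2 := by
        have : (n : ℝ) + 2 = (k : ℝ) ^ 2 + m := by exact_mod_cast hm
        linarith
      rw [hmR] at hℓ
      push_cast at hℓ
      have : 2 * (k : ℝ) ^ 2 * r < (2 * k + 1) * m := by nlinarith
      exact_mod_cast this
    have hkey := key_ineq k r m hk hmeven hnat
    have hquad : ((k : ℝ) ^ 2 + 1) * ((k.succ + r : ℕ) : ℝ) ^ 2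
        ≤ ((n : ℝ) + 1 + ((k.succ + r : ℕ) : ℝ)) ^ 2 := by
      have e : k ^ 2 + k + m + r = n + 1 + (k.succ + r) := by omega
      rw [e] at hkey
      exact_mod_cast hkey
    have hlog := mul_log_le_two _ _ k (by positivity) (by positivity) hquad
    have hsum := mul_le_mul_of_nonneg_left (sum_le_log n (k.succ + r)) hk0.le
    rw [Finset.mul_sum] at hsum
    simp only [mul_one_div] at hsum
    linarith
  · calc ∑ i ∈ Finset.Icc 1 ℓ, (k : ℝ) / ((n : ℝ) + 2 * (i : ℝ))
        ≤ ∑ i ∈ Finset.Icc 1 ℓ, 1 / (k : ℝ) := by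
          refine Finset.sum_le_sum fun i hi => ?_
          have hi1 : (1 : ℝ) ≤ i := by exact_mod_cast (Finset.mem_Icc.1 hi).1
          have h2' : (k : ℝ) ^ 2 ≤ n + 2 := by exact_mod_cast h2
          rw [div_le_div_iff₀ (by positivity) hk0]
          nlinarith
      _ = ℓ / k := by simp [div_eq_mul_inv]
      _ ≤ 1 := by
          rw [div_le_one hk0]
          exact_mod_cast hle
end
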